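/- Let d, r, s be positive integers with s > r, and let G_{ij}(M) := φ(M)_{11} · φ(M)_{i1}^{-1} · φ(M)_{ij} · φ(M)_{1j}^{-1} be defined for rd×sd complex matrices M as above (with φ(M) = A^{-1}B for M = (A B), A invertible). For a positive integer k and multi-indices α ∈ {2,…,r}^k and β ∈ {2,…,s−r}^k define I_{αβ}(M) := Tr( G_{α_1 β_1}(M) · G_{α_2 β_2}(M) ⋯ G_{α_k β_k}(M) ). Then I_{αβ} is a joint invariant: for every g ∈ GL_{rd}(ℂ) and every block-diagonal H = diag(h_1,…,h_s) with h_k ∈ GL_d(ℂ), whenever both sides are defined one has I_{αβ}(g·M·H) = I_{αβ}(M). -/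

import Mathlib

noncomputable section

/-- The left `rd × rd` square part `A` of an `rd × sd` matrix `M = (A B)`
written in `d × d` blocks. -/
def Asq {d r s : ℕ} (hrs : r ≤ s) (M : Matrix (Fin r × Fin d) (Fin s × Fin d) ℂ) :
    Matrix (Fin r × Fin d) (Fin r × Fin d) ℂ :=
  Matrix.of fun p q => M p (Fin.castLE hrs q.1, q.2)

/-- The column index `r + j` (0-based) of the `j`-th block column of `B`. -/
def colIdx (r s : ℕ) (j : Fin (s - r)) : Fin s :=
  ⟨r + j, by have := j.isLt; omega⟩

/-- The `d × d` block of `φ(M) = A⁻¹ B` in block row `i` and block column `j`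
(both 0-based). -/
def Phiblk {d r s : ℕ} (hrs : r ≤ s) (M : Matrix (Fin r × Fin d) (Fin s × Fin d) ℂ)
    (i : Fin r) (j : Fin (s - r)) : Matrix (Fin d) (Fin d) ℂ :=
  Matrix.of fun a b => ((Asq hrs M)⁻¹ * M) (i, a) (colIdx r s j, b)

/-- `G_{ij}(M) = φ(M)₁₁ · φ(M)ᵢ₁⁻¹ · φ(M)ᵢⱼ · φ(M)₁ⱼ⁻¹` (0-based indices). -/
def Gmap {d r s : ℕ} (hrs : r ≤ s) (hr : 0 < r) (hsr : 0 < s - r)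
    (M : Matrix (Fin r × Fin d) (Fin s × Fin d) ℂ) (i : Fin r) (j : Fin (s - r)) :
    Matrix (Fin d) (Fin d) ℂ :=
  Phiblk hrs M ⟨0, hr⟩ ⟨0, hsr⟩ * (Phiblk hrs M i ⟨0, hsr⟩)⁻¹ *
    Phiblk hrs M i j * (Phiblk hrs M ⟨0, hr⟩ j)⁻¹

/-- The `sd × sd` block-diagonal matrix `diag (h 0, …, h (s-1))`. -/
def blockDiag {s d : ℕ} (h : Fin s → Matrix (Fin d) (Fin d) ℂ) :
    Matrix (Fin s × Fin d) (Fin s × Fin d) ℂ :=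
  Matrix.of fun p q => if p.1 = q.1 then h p.1 p.2 q.2 else 0

theorem mul_bd_apply {n : Type*} {s d : ℕ} (X : Matrix n (Fin s × Fin d) ℂ)
    (h : Fin s → Matrix (Fin d) (Fin d) ℂ) (p : n) (j : Fin s) (b : Fin d) :
    (X * blockDiag h) p (j, b) = ∑ c, X p (j, c) * h j c b := by
  simp only [Matrix.mul_apply, blockDiag, Matrix.of_apply, Fintype.sum_prod_type]
  rw [Finset.sum_eq_single j]
  · simp
  · intro t _ ht
    simp [ht]
  · simp

theorem bd_mul_apply {n : Type*} {s d : ℕ} (X : Matrix (Fin s × Fin d) n ℂ)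
    (h : Fin s → Matrix (Fin d) (Fin d) ℂ) (p : n) (j : Fin s) (b : Fin d) :
    (blockDiag h * X) (j, b) p = ∑ c, h j b c * X (j, c) p := by
  simp only [Matrix.mul_apply, blockDiag, Matrix.of_apply, Fintype.sum_prod_type]
  rw [Finset.sum_eq_single j]
  · simp
  · intro t _ ht
    simp [ht.symm]
  · simp

theorem bd_inv {s d : ℕ} (h : Fin s → Matrix (Fin d) (Fin d) ℂ) (hh : ∀ t, IsUnit (h t)) :
    (blockDiag h)⁻¹ = blockDiag fun t => (h t)⁻¹ := by
  apply Matrix.inv_eq_right_inv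
  ext ⟨i, a⟩ ⟨j, b⟩
  rw [bd_mul_apply]
  have key : h i * (h i)⁻¹ = 1 :=
    Matrix.mul_nonsing_inv _ ((Matrix.isUnit_iff_isUnit_det _).1 (hh i))
  by_cases hij : i = j
  · subst hij
    have := congrFun (congrFun key a) b
    simp only [Matrix.mul_apply] at this
    simp [blockDiag, this, Matrix.one_apply]
  · simp [blockDiag, hij, Matrix.one_apply]

theorem Asq_act {d r s : ℕ} (hrs : r ≤ s) (M : Matrix (Fin r × Fin d) (Fin s × Fin d) ℂ)
    (g : Matrix (Fin r × Fin d) (Fin r × Fin d) ℂ) (h : Fin s → Matrix (Fin d) (Fin d) ℂ) :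
    Asq hrs (g * M * blockDiag h) =
      g * Asq hrs M * blockDiag fun t => h (Fin.castLE hrs t) := by
  ext p ⟨j, b⟩
  rw [mul_bd_apply]
  simp only [Asq, Matrix.of_apply]
  rw [mul_bd_apply]
  simp only [Matrix.mul_apply, Matrix.of_apply]

theorem Phi_act {d r s : ℕ} (hrs : r ≤ s) (M : Matrix (Fin r × Fin d) (Fin s × Fin d) ℂ)
    (g : Matrix (Fin r × Fin d) (Fin r × Fin d) ℂ) (hg : IsUnit g)
    (h : Fin s → Matrix (Fin d) (Fin d) ℂ) (hh : ∀ t, IsUnit (h t))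
    (i : Fin r) (j : Fin (s - r)) :
    Phiblk hrs (g * M * blockDiag h) i j =
      (h (Fin.castLE hrs i))⁻¹ * Phiblk hrs M i j * h (colIdx r s j) := by
  have e : (Asq hrs (g * M * blockDiag h))⁻¹ * (g * M * blockDiag h) =
      (blockDiag fun t => (h (Fin.castLE hrs t))⁻¹) * ((Asq hrs M)⁻¹ * M) * blockDiag h := by
    rw [Asq_act, Matrix.mul_inv_rev, Matrix.mul_inv_rev, bd_inv _ (fun t => hh _)]
    have hgg : g⁻¹ * g = 1 := Matrix.nonsing_inv_mul _ ((Matrix.isUnit_iff_isUnit_det _).1 hg)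
    have : g⁻¹ * (g * (M * blockDiag h)) = M * blockDiag h := by
      rw [← Matrix.mul_assoc, hgg, Matrix.one_mul]
    simp only [Matrix.mul_assoc, this]
  ext a b
  simp only [Phiblk, Matrix.of_apply]
  rw [e, mul_bd_apply, Matrix.mul_apply]
  refine Finset.sum_congr rfl fun c _ => ?_
  rw [bd_mul_apply, Matrix.mul_apply]
  rfl

theorem G_act {d r s : ℕ} (hrs : r ≤ s) (hr : 0 < r) (hsr : 0 < s - r)
    (M : Matrix (Fin r × Fin d) (Fin s × Fin d) ℂ)
    (g : Matrix (Fin r × Fin d) (Fin r × Fin d) ℂ) (hg : IsUnit g)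
    (h : Fin s → Matrix (Fin d) (Fin d) ℂ) (hh : ∀ t, IsUnit (h t))
    (i : Fin r) (j : Fin (s - r)) :
    Gmap hrs hr hsr (g * M * blockDiag h) i j =
      (h (Fin.castLE hrs ⟨0, hr⟩))⁻¹ * Gmap hrs hr hsr M i j * h (Fin.castLE hrs ⟨0, hr⟩) := by
  have hd := fun t => (Matrix.isUnit_iff_isUnit_det _).1 (hh t)
  have c1 : ∀ t (X : Matrix (Fin d) (Fin d) ℂ), h t * ((h t)⁻¹ * X) = X :=
    fun t X => Matrix.mul_nonsing_inv_cancel_left _ X (hd t)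
  simp only [Gmap, Phi_act hrs M g hg h hh]
  simp only [Matrix.mul_inv_rev, Matrix.mul_assoc,
    Matrix.nonsing_inv_nonsing_inv _ (hd _), c1]

theorem conj_prod {d : ℕ} (u : Matrix (Fin d) (Fin d) ℂ) (hu : IsUnit u)
    (L : List (Matrix (Fin d) (Fin d) ℂ)) :
    (L.map fun X => u⁻¹ * X * u).prod = u⁻¹ * L.prod * u := by
  have hd := (Matrix.isUnit_iff_isUnit_det _).1 hu
  induction L with
  | nil => simp [Matrix.nonsing_inv_mul _ hd]
  | cons X L ih =>
    rw [List.map_cons, List.prod_cons, ih, List.prod_cons]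
    simp only [Matrix.mul_assoc, Matrix.mul_nonsing_inv_cancel_left _ _ hd]

/-- `I_{αβ}(M) = Tr (G_{α₁β₁}(M) ⋯ G_{α_kβ_k}(M))` is invariant under
`M ↦ g · M · diag (h 1, …, h s)`. -/
theorem stmt15 (d r s : ℕ) (hd : 0 < d) (hr : 0 < r) (hs : r < s)
    (k : ℕ) (hk : 0 < k) (α : Fin k → Fin r) (β : Fin k → Fin (s - r))
    (hα : ∀ l, α l ≠ ⟨0, hr⟩) (hβ : ∀ l, β l ≠ ⟨0, by omega⟩)
    (M : Matrix (Fin r × Fin d) (Fin s × Fin d) ℂ)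
    (hA : IsUnit (Asq hs.le M))
    (hα1 : ∀ l, IsUnit (Phiblk hs.le M (α l) ⟨0, by omega⟩))
    (h1β : ∀ l, IsUnit (Phiblk hs.le M ⟨0, hr⟩ (β l)))
    (g : Matrix (Fin r × Fin d) (Fin r × Fin d) ℂ) (hg : IsUnit g)
    (h : Fin s → Matrix (Fin d) (Fin d) ℂ) (hh : ∀ t, IsUnit (h t)) :
    Matrix.trace
        (List.ofFn fun l =>
          Gmap hs.le hr (by omega) (g * M * blockDiag h) (α l) (β l)).prod =
      Matrix.trace (List.ofFn fun l => Gmap hs.le hr (by omega) M (α l) (β l)).prod := by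
  have e : (List.ofFn fun l =>
      Gmap hs.le hr (by omega) (g * M * blockDiag h) (α l) (β l)) =
      (List.ofFn fun l => Gmap hs.le hr (by omega) M (α l) (β l)).map
        fun X => (h (Fin.castLE hs.le ⟨0, hr⟩))⁻¹ * X * h (Fin.castLE hs.le ⟨0, hr⟩) := by
    rw [List.map_ofFn]
    congr 1
    funext l
    exact G_act hs.le hr _ M g hg h hh _ _
  have hd := (Matrix.isUnit_iff_isUnit_det _).1 (hh (Fin.castLE hs.le ⟨0, hr⟩))
  rw [e, conj_prod _ (hh _), Matrix.trace_mul_comm, ← Matrix.mul_assoc,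
    Matrix.mul_nonsing_inv _ hd, Matrix.one_mul]
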